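/- For every infinite cardinal λ there exists a unital complex C*-algebra A that is simple in the sense that its only closed two-sided ideals are {0} and A, has a dense subset of cardinality at most 2^λ, and such that for every complex Banach space E having a dense subset of cardinality at most λ, there is no continuous algebra isomorphism between A and the Calkin algebra B(E)/K(E). -/

import Mathlib

open Cardinal

/-- The two-sided ideal of compact operators in `B(E)`, the algebra of bounded linear
operators on `E`. -/
def compactIdeal (𝕜 : Type*) [NontriviallyNormedField 𝕜]
    (E : Type*) [NormedAddCommGroup E] [NormedSpace 𝕜 E] : TwoSidedIdeal (E →L[𝕜] E) :=
  TwoSidedIdeal.mk' {f : E →L[𝕜] E | IsCompactOperator f}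
    isCompactOperator_zero
    (fun hf hg => hf.add hg)
    (fun hf => hf.neg)
    (fun {f _} hg => hg.clm_comp f)
    (fun {_ g} hf => hf.comp_clm g)

/-- The Calkin algebra `B(E)/K(E)`, as a quotient ring. -/
def Calkin (𝕜 : Type*) [NontriviallyNormedField 𝕜]
    (E : Type*) [NormedAddCommGroup E] [NormedSpace 𝕜 E] : Type _ :=
  (compactIdeal 𝕜 E).ringCon.Quotient

noncomputable instance (𝕜 : Type*) [NontriviallyNormedField 𝕜]
    (E : Type*) [NormedAddCommGroup E] [NormedSpace 𝕜 E] : Ring (Calkin 𝕜 E) :=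
  inferInstanceAs (Ring (compactIdeal 𝕜 E).ringCon.Quotient)

/-- The Calkin algebra carries the quotient topology induced by the quotient map from `B(E)`;
since the compact operators form a closed subspace of `B(E)`, this is exactly the topology of
the quotient norm. -/
instance (𝕜 : Type*) [NontriviallyNormedField 𝕜]
    (E : Type*) [NormedAddCommGroup E] [NormedSpace 𝕜 E] : TopologicalSpace (Calkin 𝕜 E) :=
  inferInstanceAs (TopologicalSpace (Quotient (compactIdeal 𝕜 E).ringCon.toSetoid))

/-- The Calkin algebra of a complex Banach space is a complex algebra. -/
noncomputable instance (E : Type*) [NormedAddCommGroup E] [NormedSpace ℂ E] :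
    Algebra ℂ (Calkin ℂ E) :=
  RingHom.toAlgebra' (((compactIdeal ℂ E).ringCon.mk').comp (algebraMap ℂ (E →L[ℂ] E)))
    (fun z => Quotient.ind' fun x => by
      show (compactIdeal ℂ E).ringCon.mk' _ * (compactIdeal ℂ E).ringCon.mk' x
          = (compactIdeal ℂ E).ringCon.mk' x * (compactIdeal ℂ E).ringCon.mk' _
      rw [← map_mul, ← map_mul, Algebra.commutes])

/-- A bundled unital (complex) C⋆-algebra. -/
structure BundledCStarAlgebra : Type (u + 1) where
  carrier : Type u
  [cstar : CStarAlgebra carrier]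

attribute [instance] BundledCStarAlgebra.cstar

universe u

/-!
The proof counts. A Banach space with a dense `ι`-indexed family is isometric to a closed subspace
of `ℓ^∞(ι, ℂ)`, so up to isomorphism there are at most `2 ^ #ι` such spaces, and each of their
Calkin algebras has at most `2 ^ #ι` elements. Hence, as `a` runs over the `ι`-indexed families in
these Calkin algebras, at most `2 ^ #ι` sets occur as the set of `f : ι → ZMod 2` such that some
nonzero `t` satisfies `t * a i = (-1) ^ f i * a i * t` for all `i`.

On the other hand, let `Γ` be a linear subspace of `ι → ZMod 2`, and twist the group C⋆-algebra of
`(ι →₀ ZMod 2) × Γ` by the sign of the evaluation pairing. Comparing Fourier coefficients shows that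
the canonical unitaries at the basis vectors of `ι →₀ ZMod 2` have exactly `Γ` as their set of
exponents. If `Γ` contains the coordinate vectors, the pairing is nondegenerate; averaging over
conjugations by the canonical unitaries then kills all Fourier coefficients but the one at `0`,
which makes the algebra simple. There are `2 ^ 2 ^ #ι` such `Γ`, so one of them does not come from
a Calkin algebra.
-/

open scoped ENNReal InnerProductSpace lp

section SignedPermutation

variable {ι 𝕜 H : Type*} [RCLike 𝕜] [NormedAddCommGroup H] [InnerProductSpace 𝕜 H]

theorem orthonormal_units_smul {e : ι → H} (he : Orthonormal 𝕜 e) (s : ι → ℤˣ) :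
    Orthonormal 𝕜 fun i ↦ s i • e i := by
  refine ⟨fun i ↦ by rw [norm_units_zsmul, he.1 i], fun i j hij ↦ ?_⟩
  obtain hi | hi := Int.units_eq_one_or (s i) <;> obtain hj | hj := Int.units_eq_one_or (s j) <;>
    simp [hi, hj, he.2 hij]

theorem span_range_le_span_range_units_smul_comp {R M : Type*} [Ring R] [AddCommGroup M]
    [Module R M] (e : ι → M) (σ : Equiv.Perm ι) (s : ι → ℤˣ) :
    Submodule.span R (Set.range e) ≤ Submodule.span R (Set.range fun i ↦ s i • e (σ i)) := by
  rw [Submodule.span_le]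
  rintro _ ⟨i, rfl⟩
  have key : e i = s (σ.symm i) • s (σ.symm i) • e (σ (σ.symm i)) := by
    rw [smul_smul, Int.units_mul_self, one_smul, σ.apply_symm_apply]
  rw [SetLike.mem_coe, key, Units.smul_def]
  exact zsmul_mem (Submodule.subset_span (Set.mem_range_self (f := fun i ↦ s i • e (σ i)) _)) _

theorem continuousLinearMap_ext_hilbertBasis {F : Type*} [AddCommMonoid F] [Module 𝕜 F]
    [TopologicalSpace F] [T2Space F] (b : HilbertBasis ι 𝕜 H) {S T : H →L[𝕜] F}
    (h : ∀ i, S (b i) = T (b i)) : S = T :=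
  ContinuousLinearMap.ext_on
    (Submodule.dense_iff_topologicalClosure_eq_top.2 b.dense_span) (Set.forall_mem_range.2 h)

variable [CompleteSpace H]

/-- The Hilbert basis with vectors `s i • b (σ i)`, obtained by permuting `b` up to sign. -/
noncomputable def signedReindex (b : HilbertBasis ι 𝕜 H) (σ : Equiv.Perm ι) (s : ι → ℤˣ) :
    HilbertBasis ι 𝕜 H :=
  .mk (v := fun i ↦ s i • b (σ i))
    (orthonormal_units_smul (b.orthonormal.comp σ σ.injective) s) <|
    b.dense_span.ge.trans <| Submodule.topologicalClosure_mono <|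
      span_range_le_span_range_units_smul_comp b σ s

/-- The unitary permuting the vectors of a Hilbert basis up to sign, `b i ↦ s i • b (σ i)`. -/
noncomputable def signedPermutation (b : HilbertBasis ι 𝕜 H) (σ : Equiv.Perm ι) (s : ι → ℤˣ) :
    unitary (H →L[𝕜] H) :=
  Unitary.linearIsometryEquiv.symm (b.repr.trans (signedReindex b σ s).repr.symm)

theorem signedPermutation_apply_basis (b : HilbertBasis ι 𝕜 H) (σ : Equiv.Perm ι) (s : ι → ℤˣ)
    (i : ι) : (signedPermutation b σ s : H →L[𝕜] H) (b i) = s i • b (σ i) := by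
  classical
  change (signedReindex b σ s).repr.symm (b.repr (b i)) = _
  rw [HilbertBasis.repr_self, HilbertBasis.repr_symm_single, signedReindex, HilbertBasis.coe_mk]

end SignedPermutation

section TwistedTranslation

variable {V : Type*} [AddCommGroup V] [Module (ZMod 2) V] (β : LinearMap.BilinForm (ZMod 2) V)

/-- The standard Hilbert basis of `ℓ²(V, ℂ)`. -/
noncomputable def deltaBasis (V : Type*) : HilbertBasis V ℂ ℓ²(V, ℂ) :=
  .ofRepr (.refl ℂ _)

/-- The translation by `v` on `ℓ²(V, ℂ)`, twisted by the `±1`-valued cocycle `(-1) ^ β v u`. -/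
noncomputable def twistedTranslation (v : V) : unitary (ℓ²(V, ℂ) →L[ℂ] ℓ²(V, ℂ)) :=
  signedPermutation (deltaBasis V) (Equiv.addRight v) fun u ↦ (-1) ^ β v u

theorem twistedTranslation_apply_delta (v u : V) :
    (twistedTranslation β v : ℓ²(V, ℂ) →L[ℂ] ℓ²(V, ℂ)) (deltaBasis V u) =
      (-1 : ℤˣ) ^ β v u • deltaBasis V (u + v) :=
  signedPermutation_apply_basis ..

theorem twistedTranslation_apply_delta_zero (v : V) :
    (twistedTranslation β v : ℓ²(V, ℂ) →L[ℂ] ℓ²(V, ℂ)) (deltaBasis V 0) = deltaBasis V v := by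
  simp [twistedTranslation_apply_delta]

theorem twistedTranslation_zero : (twistedTranslation β 0 : ℓ²(V, ℂ) →L[ℂ] ℓ²(V, ℂ)) = 1 :=
  continuousLinearMap_ext_hilbertBasis (deltaBasis V) fun u ↦ by
    simp [twistedTranslation_apply_delta]

theorem twistedTranslation_mul (v w : V) :
    (twistedTranslation β v * twistedTranslation β w : ℓ²(V, ℂ) →L[ℂ] ℓ²(V, ℂ)) =
      (-1 : ℤˣ) ^ β v w • (twistedTranslation β (v + w) : ℓ²(V, ℂ) →L[ℂ] ℓ²(V, ℂ)) := by
  refine continuousLinearMap_ext_hilbertBasis (deltaBasis V) fun u ↦ ?_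
  simp only [mul_apply_eq_comp, _root_.smul_apply, twistedTranslation_apply_delta, Units.smul_def,
    map_zsmul, map_add, LinearMap.add_apply, uzpow_add, smul_smul, Units.val_mul]
  rw [add_assoc, add_comm w v]
  congr 1
  ring

theorem star_twistedTranslation (v : V) :
    star (twistedTranslation β v : ℓ²(V, ℂ) →L[ℂ] ℓ²(V, ℂ)) =
      (-1 : ℤˣ) ^ β v v • (twistedTranslation β v : ℓ²(V, ℂ) →L[ℂ] ℓ²(V, ℂ)) := by
  refine left_inv_eq_right_inv (Unitary.coe_star_mul_self (twistedTranslation β v)) ?_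
  rw [mul_smul_comm, twistedTranslation_mul, ZModModule.add_self, twistedTranslation_zero,
    smul_smul, Int.units_mul_self, one_smul]

theorem adjoin_range_twistedTranslation :
    (StarAlgebra.adjoin ℂ (Set.range fun v ↦
      (twistedTranslation β v : ℓ²(V, ℂ) →L[ℂ] ℓ²(V, ℂ)))).toSubalgebra.toSubmodule =
    Submodule.span ℂ (Set.range fun v ↦
      (twistedTranslation β v : ℓ²(V, ℂ) →L[ℂ] ℓ²(V, ℂ))) := by
  rw [StarAlgebra.adjoin_eq_span]
  refine le_antisymm (Submodule.span_le.2 fun T hT ↦ ?_) <| Submodule.span_mono <|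
    Set.subset_union_left.trans Submonoid.subset_closure
  have signed_translation : ∃ (s : ℤˣ) (v : V), T = s • (twistedTranslation β v).1 := by
    induction hT using Submonoid.closure_induction with
    | mem T hT =>
      rcases hT with ⟨v, rfl⟩ | ⟨v, hv⟩
      · exact ⟨1, v, (one_smul _ _).symm⟩
      · exact ⟨_, v, by rw [← star_twistedTranslation, ← star_star T, ← hv]⟩
    | one => exact ⟨1, 0, by rw [twistedTranslation_zero, one_smul]⟩
    | mul S T _ _ hS hT =>
      obtain ⟨s, v, rfl⟩ := hS
      obtain ⟨t, w, rfl⟩ := hT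
      exact ⟨_, v + w, by
        rw [smul_mul_assoc, mul_smul_comm, twistedTranslation_mul, smul_smul, smul_smul]⟩
  obtain ⟨s, v, rfl⟩ := signed_translation
  exact zsmul_mem (Submodule.subset_span (Set.mem_range_self v)) _

/-- The twisted group C⋆-algebra of `V`, as an algebra of operators on `ℓ²(V, ℂ)`. -/
noncomputable def twistedGroupSubalgebra : StarSubalgebra ℂ (ℓ²(V, ℂ) →L[ℂ] ℓ²(V, ℂ)) :=
  (StarAlgebra.adjoin ℂ (Set.range fun v ↦
    (twistedTranslation β v : ℓ²(V, ℂ) →L[ℂ] ℓ²(V, ℂ)))).topologicalClosure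

instance : IsClosed (twistedGroupSubalgebra β : Set (ℓ²(V, ℂ) →L[ℂ] ℓ²(V, ℂ))) :=
  StarSubalgebra.isClosed_topologicalClosure _

/-- The reduced C⋆-algebra of the group `V` twisted by the cocycle `(-1) ^ β v w`. It is kept
separate from `twistedGroupSubalgebra` so that all its structure comes from a single
`CStarAlgebra` instance. -/
def TwistedGroupAlgebra : Type _ :=
  twistedGroupSubalgebra β

noncomputable instance : CStarAlgebra (TwistedGroupAlgebra β) :=
  inferInstanceAs (CStarAlgebra (twistedGroupSubalgebra β))

end TwistedTranslation

namespace TwistedGroupAlgebra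

variable {V : Type*} [AddCommGroup V] [Module (ZMod 2) V] {β : LinearMap.BilinForm (ZMod 2) V}

variable (β) in
/-- The defining representation of the twisted group algebra on `ℓ²(V, ℂ)`. -/
noncomputable def toOperator : TwistedGroupAlgebra β →⋆ₐ[ℂ] ℓ²(V, ℂ) →L[ℂ] ℓ²(V, ℂ) :=
  (twistedGroupSubalgebra β).subtype

theorem isometry_toOperator : Isometry (toOperator β) :=
  isometry_subtype_coe

variable (β) in
/-- The canonical unitary generator of the twisted group algebra at `v`. -/
noncomputable def generator (v : V) : unitary (TwistedGroupAlgebra β) :=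
  ⟨⟨twistedTranslation β v, StarSubalgebra.le_topologicalClosure _ <|
      StarAlgebra.subset_adjoin ℂ _ (Set.mem_range_self v)⟩,
    isometry_toOperator.injective (Unitary.coe_star_mul_self (twistedTranslation β v)),
    isometry_toOperator.injective (Unitary.coe_mul_star_self (twistedTranslation β v))⟩

theorem generator_zero : (generator β 0 : TwistedGroupAlgebra β) = 1 :=
  isometry_toOperator.injective (twistedTranslation_zero β)

theorem generator_mul (v w : V) : (generator β v * generator β w : TwistedGroupAlgebra β) =
    (-1 : ℤˣ) ^ β v w • (generator β (v + w) : TwistedGroupAlgebra β) :=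
  isometry_toOperator.injective (twistedTranslation_mul β v w)

theorem generator_mul_comm (v w : V) : (generator β w * generator β v : TwistedGroupAlgebra β) =
    (-1 : ℤˣ) ^ (β v w + β w v) • (generator β v * generator β w : TwistedGroupAlgebra β) := by
  rw [generator_mul, generator_mul, smul_smul, add_comm v w, uzpow_add, mul_right_comm,
    Int.units_mul_self, one_mul]

theorem star_generator_mul_generator_mul (v w : V) :
    (star (generator β v) * generator β w * generator β v : TwistedGroupAlgebra β) =
      (-1 : ℤˣ) ^ (β v w + β w v) • (generator β w : TwistedGroupAlgebra β) := by
  rw [mul_assoc, generator_mul_comm v w, mul_smul_comm, ← mul_assoc, Unitary.coe_star,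
    Unitary.coe_star_mul_self, one_mul]

theorem dense_span_range_generator :
    Dense (Submodule.span ℂ (Set.range fun v ↦ (generator β v : TwistedGroupAlgebra β)) :
      Set (TwistedGroupAlgebra β)) := by
  intro T
  rw [isometry_toOperator.isUniformInducing.isInducing.closure_eq_preimage_closure_image]
  refine closure_mono (fun S hS ↦ ?_) T.2
  have hS : S ∈ Submodule.span ℂ (Set.range fun v ↦
      (twistedTranslation β v : ℓ²(V, ℂ) →L[ℂ] ℓ²(V, ℂ))) := by
    rwa [← adjoin_range_twistedTranslation]
  have map_span := Submodule.map_span (toOperator β).toAlgHom.toLinearMap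
    (Set.range fun v ↦ (generator β v : TwistedGroupAlgebra β))
  rw [← Set.range_comp] at map_span
  exact map_span.ge hS

end TwistedGroupAlgebra

namespace TwistedGroupAlgebra

variable {V : Type*} [AddCommGroup V] [Module (ZMod 2) V] {β : LinearMap.BilinForm (ZMod 2) V}

variable (β) in
/-- The Fourier coefficient at `w`: on a finite combination of generators, it reads off the
coefficient of `generator β w`. -/
noncomputable def coeff (w : V) : TwistedGroupAlgebra β →L[ℂ] ℂ :=
  (innerSL ℂ (deltaBasis V w)).comp <|
    (ContinuousLinearMap.apply ℂ ℓ²(V, ℂ) (deltaBasis V 0)).comp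
      ⟨(toOperator β).toAlgHom.toLinearMap, isometry_toOperator.continuous⟩

theorem coeff_generator [DecidableEq V] (w v : V) :
    coeff β w (generator β v) = if w = v then 1 else 0 :=
  (congrArg (⟪deltaBasis V w, ·⟫_ℂ) (twistedTranslation_apply_delta_zero β v)).trans <|
    orthonormal_iff_ite.1 (deltaBasis V).orthonormal w v

theorem generator_ne_zero (v : V) : (generator β v : TwistedGroupAlgebra β) ≠ 0 := by
  classical
  intro h
  simpa [h] using coeff_generator (β := β) v v

instance : Nontrivial (TwistedGroupAlgebra β) :=
  ⟨_, 0, generator_ne_zero 0⟩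

theorem norm_coeff_le (w : V) (T : TwistedGroupAlgebra β) : ‖coeff β w T‖ ≤ ‖T‖ := by
  have norm_delta (v : V) : ‖deltaBasis V v‖ = 1 := (deltaBasis V).orthonormal.1 v
  calc ‖coeff β w T‖ ≤ ‖deltaBasis V w‖ * ‖toOperator β T (deltaBasis V 0)‖ :=
      norm_inner_le_norm (𝕜 := ℂ) (deltaBasis V w) (toOperator β T (deltaBasis V 0))
    _ ≤ ‖toOperator β T‖ := by simpa [norm_delta] using (toOperator β T).le_opNorm (deltaBasis V 0)
    _ = ‖T‖ := isometry_toOperator.norm_map_of_map_zero (map_zero _) T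

theorem coeff_conj (v w : V) (T : TwistedGroupAlgebra β) :
    coeff β w (star (generator β v) * T * generator β v) =
      (-1 : ℤˣ) ^ (β v w + β w v) • coeff β w T := by
  classical
  let conj : TwistedGroupAlgebra β →L[ℂ] TwistedGroupAlgebra β :=
    ((ContinuousLinearMap.mul ℂ _).flip (generator β v).1).comp
      (ContinuousLinearMap.mul ℂ _ (star (generator β v)).1)
  suffices (coeff β w).comp conj = (-1 : ℤˣ) ^ (β v w + β w v) • coeff β w from
    DFunLike.congr_fun this T
  refine ContinuousLinearMap.ext_on dense_span_range_generator (Set.forall_mem_range.2 fun u ↦ ?_)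
  change coeff β w (star (generator β v) * generator β u * generator β v) =
    (-1 : ℤˣ) ^ (β v w + β w v) • coeff β w (generator β u)
  rw [star_generator_mul_generator_mul, Units.smul_def, Units.smul_def, map_zsmul, coeff_generator]
  split_ifs with h
  · rw [h]
  · simp

theorem coeff_zero_star_mul_self (T : TwistedGroupAlgebra β) :
    coeff β 0 (star T * T) = ⟪toOperator β T (deltaBasis V 0), toOperator β T (deltaBasis V 0)⟫_ℂ :=
  ContinuousLinearMap.adjoint_inner_right (toOperator β T) _ _

theorem eq_zero_of_apply_delta_zero {T : TwistedGroupAlgebra β}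
    (hT : toOperator β T (deltaBasis V 0) = 0) : T = 0 := by
  refine isometry_toOperator.injective <|
    continuousLinearMap_ext_hilbertBasis (deltaBasis V) fun v ↦ ?_
  have conj_eq : star (T * generator β v) * (T * generator β v) =
      star (generator β v).1 * (star T * T) * generator β v := by
    rw [star_mul]; noncomm_ring
  have key : coeff β 0 (star (T * generator β v) * (T * generator β v)) = 0 := by
    rw [conj_eq, ← Unitary.coe_star, coeff_conj, coeff_zero_star_mul_self, hT, inner_zero_left,
      smul_zero]
  rw [coeff_zero_star_mul_self, inner_self_eq_zero] at key
  rwa [← twistedTranslation_apply_delta_zero β v]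

theorem exists_coeff_ne_zero {T : TwistedGroupAlgebra β} (hT : T ≠ 0) : ∃ w, coeff β w T ≠ 0 := by
  contrapose! hT
  refine eq_zero_of_apply_delta_zero ((deltaBasis V).repr.injective (lp.ext (funext fun w ↦ ?_)))
  rw [HilbertBasis.repr_apply_apply, LinearIsometryEquiv.map_zero]
  exact hT w

theorem coeff_zero_star_mul_self_ne_zero {T : TwistedGroupAlgebra β} (hT : T ≠ 0) :
    coeff β 0 (star T * T) ≠ 0 := by
  rw [coeff_zero_star_mul_self, inner_self_ne_zero]
  exact mt eq_zero_of_apply_delta_zero hT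

end TwistedGroupAlgebra

section Averaging

variable {A : Type*} [NormedRing A] [NormedAlgebra ℂ A]

/-- A linear map that behaves like an average of inner automorphisms: a unital contraction
preserving every two-sided ideal. -/
structure IsAveraging (Φ : A →ₗ[ℂ] A) : Prop where
  norm_apply_le (a : A) : ‖Φ a‖ ≤ ‖a‖
  map_one : Φ 1 = 1
  apply_mem (I : TwoSidedIdeal A) {a : A} : a ∈ I → Φ a ∈ I

theorem IsAveraging.id : IsAveraging (LinearMap.id : A →ₗ[ℂ] A) :=
  ⟨fun _ ↦ le_rfl, rfl, fun _ _ ↦ _root_.id⟩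

theorem IsAveraging.comp {Φ Ψ : A →ₗ[ℂ] A} (hΦ : IsAveraging Φ) (hΨ : IsAveraging Ψ) :
    IsAveraging (Φ ∘ₗ Ψ) where
  norm_apply_le a := (hΦ.norm_apply_le _).trans (hΨ.norm_apply_le a)
  map_one := by rw [LinearMap.comp_apply, hΨ.map_one, hΦ.map_one]
  apply_mem I _ ha := hΦ.apply_mem I (hΨ.apply_mem I ha)

end Averaging

theorem smul_mem_twoSidedIdeal {K A : Type*} [CommSemiring K] [Ring A] [Algebra K A]
    (I : TwoSidedIdeal A) (c : K) {a : A} (ha : a ∈ I) : c • a ∈ I :=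
  Submodule.smul_of_tower_mem I.asIdeal c ha

section ConjAverage

variable {A : Type*} [CStarAlgebra A]

/-- The average of the identity and of conjugation by a unitary. -/
noncomputable def conjAverage (u : unitary A) : A →ₗ[ℂ] A :=
  (2⁻¹ : ℂ) • (LinearMap.id + LinearMap.mulRight ℂ (u : A) ∘ₗ LinearMap.mulLeft ℂ (star u : A))

theorem conjAverage_apply (u : unitary A) (a : A) :
    conjAverage u a = (2⁻¹ : ℂ) • (a + star u * a * u) :=
  rfl

theorem isAveraging_conjAverage (u : unitary A) : IsAveraging (conjAverage u) where
  norm_apply_le a := by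
    have norm_conj : ‖(star u * a * u : A)‖ = ‖a‖ := by
      rw [CStarRing.norm_mul_coe_unitary, CStarRing.norm_coe_unitary_mul]
    calc ‖conjAverage u a‖ ≤ 2⁻¹ * (‖a‖ + ‖(star u * a * u : A)‖) := by
          rw [conjAverage_apply, norm_smul, norm_inv, Complex.norm_ofNat]
          gcongr
          exact norm_add_le _ _
      _ = ‖a‖ := by rw [norm_conj]; ring
  map_one := by
    rw [conjAverage_apply, mul_one, Unitary.coe_star, Unitary.coe_star_mul_self, ← two_smul ℂ,
      smul_smul, inv_mul_cancel₀ two_ne_zero, one_smul]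
  apply_mem I _ ha := smul_mem_twoSidedIdeal I _ <|
    I.add_mem ha (I.mul_mem_right _ _ (I.mul_mem_left _ _ ha))

theorem isSimpleRing_of_isAveraging [Nontrivial A]
    (h : ∀ a : A, a ≠ 0 → ∃ c : ℂ, c ≠ 0 ∧ ∀ ε > 0, ∃ Φ : A →ₗ[ℂ] A,
      IsAveraging Φ ∧ ‖c • 1 - Φ (star a * a)‖ < ε) :
    IsSimpleRing A := by
  refine .of_eq_bot_or_eq_top fun I ↦ or_iff_not_imp_left.2 fun hI ↦ ?_
  obtain ⟨a, haI, ha⟩ : ∃ a ∈ I, a ≠ 0 := by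
    contrapose! hI
    exact eq_bot_iff.2 hI
  obtain ⟨c, hc, approx⟩ := h a ha
  obtain ⟨Φ, hΦ, hlt⟩ := approx ‖c‖ (norm_pos_iff.2 hc)
  have mem_I : c⁻¹ • Φ (star a * a) ∈ I :=
    smul_mem_twoSidedIdeal I _ (hΦ.apply_mem I (I.mul_mem_left _ _ haI))
  have near_one : ‖1 - c⁻¹ • Φ (star a * a)‖ < 1 := by
    rw [← inv_smul_smul₀ hc (1 : A), ← smul_sub, norm_smul, norm_inv, inv_mul_lt_one₀
      (norm_pos_iff.2 hc)]
    exact hlt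
  have := Ideal.eq_top_of_norm_lt_one I.asIdeal (TwoSidedIdeal.mem_asIdeal.2 mem_I) near_one
  exact I.one_mem_iff.1 (TwoSidedIdeal.mem_asIdeal.1 (this ▸ Submodule.mem_top))

end ConjAverage

namespace TwistedGroupAlgebra

variable {V : Type*} [AddCommGroup V] [Module (ZMod 2) V] {β : LinearMap.BilinForm (ZMod 2) V}

theorem conjAverage_generator (v w : V) :
    conjAverage (generator β v) (generator β w : TwistedGroupAlgebra β) =
      if β v w + β w v = 0 then (generator β w : TwistedGroupAlgebra β) else 0 := by
  rw [conjAverage_apply, star_generator_mul_generator_mul]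
  split_ifs with h
  · rw [h, uzpow_zero, one_smul, ← two_smul ℂ, smul_smul, inv_mul_cancel₀ two_ne_zero, one_smul]
  · rw [show β v w + β w v = 1 from Fin.eq_one_of_ne_zero _ h, uzpow_one, Units.neg_smul,
      one_smul, add_neg_cancel, smul_zero]

theorem exists_isAveraging_generator_eq_zero (hβ : (β + β.flip).SeparatingRight) (F : Finset V)
    (hF : 0 ∉ F) : ∃ Φ : TwistedGroupAlgebra β →ₗ[ℂ] TwistedGroupAlgebra β,
      IsAveraging Φ ∧ ∀ v ∈ F, Φ (generator β v) = 0 := by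
  classical
  induction F using Finset.induction_on with
  | empty => exact ⟨_, .id, by simp⟩
  | insert v F _ ih =>
    rw [Finset.mem_insert, not_or] at hF
    obtain ⟨Φ, hΦ, hΦF⟩ := ih hF.2
    obtain ⟨w, hw⟩ : ∃ w, β w v + β v w ≠ 0 := by
      contrapose! hF
      exact fun h ↦ absurd (hβ v hF).symm h
    refine ⟨_, hΦ.comp (isAveraging_conjAverage (generator β w)), fun u hu ↦ ?_⟩
    rw [LinearMap.comp_apply, conjAverage_generator]
    obtain rfl | huF := Finset.mem_insert.1 hu
    · rw [if_neg hw, map_zero]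
    · split_ifs
      · exact hΦF u huF
      · exact map_zero Φ

theorem exists_isAveraging_eq_coeff_zero_smul_one (hβ : (β + β.flip).SeparatingRight)
    {T : TwistedGroupAlgebra β}
    (hT : T ∈ Submodule.span ℂ (Set.range fun v ↦ (generator β v : TwistedGroupAlgebra β))) :
    ∃ Φ : TwistedGroupAlgebra β →ₗ[ℂ] TwistedGroupAlgebra β,
      IsAveraging Φ ∧ Φ T = coeff β 0 T • 1 := by
  classical
  obtain ⟨c, rfl⟩ := Finsupp.mem_span_range_iff_exists_finsupp.1 hT
  obtain ⟨Φ, hΦ, hΦc⟩ := exists_isAveraging_generator_eq_zero hβ (c.support.erase 0) (by simp)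
  refine ⟨Φ, hΦ, ?_⟩
  simp only [Finsupp.sum, map_sum, map_smul, Finset.sum_smul]
  refine Finset.sum_congr rfl fun v hv ↦ ?_
  rw [coeff_generator, smul_assoc]
  split_ifs with h
  · rw [← h, generator_zero, hΦ.map_one, one_smul]
  · rw [hΦc v (Finset.mem_erase.2 ⟨Ne.symm h, hv⟩), zero_smul]

theorem exists_isAveraging_norm_sub_lt (hβ : (β + β.flip).SeparatingRight)
    (T : TwistedGroupAlgebra β) {ε : ℝ} (hε : 0 < ε) :
    ∃ Φ : TwistedGroupAlgebra β →ₗ[ℂ] TwistedGroupAlgebra β,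
      IsAveraging Φ ∧ ‖coeff β 0 T • 1 - Φ T‖ < ε := by
  obtain ⟨S, hS, hTS⟩ :=
    Metric.mem_closure_iff.1 (dense_span_range_generator T) (ε / 2) (half_pos hε)
  rw [dist_eq_norm] at hTS
  obtain ⟨Φ, hΦ, hΦS⟩ := exists_isAveraging_eq_coeff_zero_smul_one hβ hS
  refine ⟨Φ, hΦ, ?_⟩
  calc ‖coeff β 0 T • 1 - Φ T‖ = ‖coeff β 0 (T - S) • 1 - Φ (T - S)‖ := by
        rw [map_sub, map_sub, hΦS, sub_smul, sub_sub_sub_cancel_right]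
    _ ≤ ‖coeff β 0 (T - S) • (1 : TwistedGroupAlgebra β)‖ + ‖Φ (T - S)‖ := norm_sub_le _ _
    _ ≤ ‖T - S‖ + ‖T - S‖ := by
        gcongr
        · rw [norm_smul, norm_one, mul_one]
          exact norm_coeff_le 0 _
        · exact hΦ.norm_apply_le _
    _ < ε := by linarith

theorem isSimpleRing (hβ : (β + β.flip).SeparatingRight) : IsSimpleRing (TwistedGroupAlgebra β) :=
  isSimpleRing_of_isAveraging fun T hT ↦ ⟨coeff β 0 (star T * T),
    coeff_zero_star_mul_self_ne_zero hT, fun _ ↦ exists_isAveraging_norm_sub_lt hβ _⟩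

end TwistedGroupAlgebra

section CommutationExponents

variable {J R S : Type*} [Ring R] [Ring S]

/-- The exponents `f` for which some nonzero `t` commutes with each `a j` up to the sign
`(-1) ^ f j`. This is the isomorphism invariant that tells twisted group algebras from Calkin
algebras. -/
def commutationExponents (a : J → R) : Set (J → ZMod 2) :=
  {f | ∃ t ≠ 0, ∀ j, t * a j = (-1 : ℤˣ) ^ f j • (a j * t)}

theorem commutationExponents_subset_ringEquiv_comp (e : R ≃+* S) (a : J → R) :
    commutationExponents a ⊆ commutationExponents (e ∘ a) := by
  rintro f ⟨t, ht, h⟩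
  refine ⟨e t, (map_ne_zero_iff e e.injective).2 ht, fun j ↦ ?_⟩
  rw [Function.comp_apply, ← map_mul, h j, Units.smul_def, Units.smul_def, map_zsmul, map_mul]

theorem commutationExponents_ringEquiv_comp (e : R ≃+* S) (a : J → R) :
    commutationExponents (e ∘ a) = commutationExponents a := by
  refine (commutationExponents_subset_ringEquiv_comp e a).antisymm' ?_
  simpa [Function.comp_def] using commutationExponents_subset_ringEquiv_comp e.symm (e ∘ a)

theorem intUnits_neg_one_pow_injective : Function.Injective fun x : ZMod 2 ↦ (-1 : ℤˣ) ^ x := by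
  decide

end CommutationExponents

namespace TwistedGroupAlgebra

variable {V : Type*} [AddCommGroup V] [Module (ZMod 2) V] {β : LinearMap.BilinForm (ZMod 2) V}

theorem commutationExponents_generator {J : Type*} (v : J → V) :
    commutationExponents (fun j ↦ (generator β (v j) : TwistedGroupAlgebra β)) =
      Set.range fun w j ↦ β (v j) w + β w (v j) := by
  ext f
  constructor
  · rintro ⟨T, hT, h⟩
    obtain ⟨w, hw⟩ := exists_coeff_ne_zero hT
    refine ⟨w, funext fun j ↦ intUnits_neg_one_pow_injective ?_⟩
    have key := coeff_conj (v j) w T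
    rw [mul_assoc, h j, mul_smul_comm, ← mul_assoc, Unitary.coe_star, Unitary.coe_star_mul_self,
      one_mul, Units.smul_def, Units.smul_def, map_zsmul] at key
    exact Units.ext (smul_left_injective ℤ hw key.symm)
  · rintro ⟨w, rfl⟩
    exact ⟨generator β w, generator_ne_zero w, fun j ↦ generator_mul_comm (v j) w⟩

theorem exists_dense_mk_le {V : Type u} [AddCommGroup V] [Module (ZMod 2) V]
    (β : LinearMap.BilinForm (ZMod 2) V) :
    ∃ D : Set (TwistedGroupAlgebra β), Dense D ∧ #D ≤ max #V 𝔠 := by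
  refine ⟨_, dense_span_range_generator, ?_⟩
  have span_eq : (Submodule.span ℂ (Set.range fun v ↦ (generator β v : TwistedGroupAlgebra β)) :
      Set (TwistedGroupAlgebra β)) =
      Set.range (Finsupp.linearCombination ℂ fun v ↦ (generator β v : TwistedGroupAlgebra β)) := by
    rw [← Finsupp.range_linearCombination, LinearMap.coe_range]
  rw [span_eq]
  refine mk_range_le.trans ?_
  simp [mk_finsupp_lift_of_infinite']

end TwistedGroupAlgebra

section EvaluationForm

variable {K ι : Type*} [CommRing K] (Γ : Submodule K (ι → K))

/-- The bilinear form `β ((x, f), (y, g)) = ∑ i, y i * f i` on pairs of a finitely supported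
function and an element of `Γ`. -/
noncomputable def evaluationForm : LinearMap.BilinForm K ((ι →₀ K) × Γ) :=
  (Finsupp.llift K K K ι).toLinearMap.compl₁₂ (Γ.subtype ∘ₗ LinearMap.snd K (ι →₀ K) Γ)
    (LinearMap.fst K (ι →₀ K) Γ)

variable {Γ}

theorem evaluationForm_apply (v w : (ι →₀ K) × Γ) :
    evaluationForm Γ v w = w.1.sum fun i c ↦ c * v.2.1 i := by
  simp [evaluationForm]

theorem evaluationForm_single_left_add_right (w : (ι →₀ K) × Γ) (i : ι) :
    evaluationForm Γ (Finsupp.single i 1, 0) w + evaluationForm Γ w (Finsupp.single i 1, 0) =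
      w.2.1 i := by
  simp [evaluationForm_apply]

theorem separatingRight_evaluationForm_add_flip [DecidableEq ι] (hΓ : ∀ i, Pi.single i 1 ∈ Γ) :
    (evaluationForm Γ + (evaluationForm Γ).flip).SeparatingRight := by
  refine fun v hv ↦ Prod.ext (Finsupp.ext fun i ↦ ?_) (Subtype.ext (funext fun i ↦ ?_))
  · have := hv (0, ⟨Pi.single i 1, hΓ i⟩)
    simpa [evaluationForm_apply, Pi.single_apply] using this
  · exact (evaluationForm_single_left_add_right v i).symm.trans (hv (Finsupp.single i 1, 0))

theorem commutationExponents_generator_single (Γ : Submodule (ZMod 2) (ι → ZMod 2)) :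
    commutationExponents (fun i ↦ (TwistedGroupAlgebra.generator (evaluationForm Γ)
      (Finsupp.single i 1, 0) : TwistedGroupAlgebra (evaluationForm Γ))) = Γ := by
  simp only [TwistedGroupAlgebra.commutationExponents_generator,
    evaluationForm_single_left_add_right]
  ext f
  exact ⟨by rintro ⟨w, rfl⟩; exact w.2.2, fun hf ↦ ⟨(0, ⟨f, hf⟩), rfl⟩⟩

end EvaluationForm

section Counting

theorem two_power_rank_le_mk_submodule {F : Type*} {Y : Type u} [DivisionRing F]
    [AddCommGroup Y] [Module F Y] :
    2 ^ Module.rank F Y ≤ #(Submodule F Y) := by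
  let B := Module.Basis.ofVectorSpace F Y
  rw [← B.mk_eq_rank'', ← mk_set]
  refine mk_le_of_injective (f := fun S ↦ Submodule.span F (B '' S)) fun S T h ↦ ?_
  ext j
  have mem_iff (S : Set _) : j ∈ S ↔ B j ∈ Submodule.span F (B '' S) := by
    simp [B.mem_span_image]
  exact (mem_iff S).trans ((SetLike.ext_iff.1 h _).trans (mem_iff T).symm)

theorem two_power_rank_le_mk_Ici {F : Type*} {X : Type u} [DivisionRing F]
    [AddCommGroup X] [Module F X] {p : Submodule F X}
    (hX : ℵ₀ ≤ Module.rank F X) (hp : Module.rank F p < Module.rank F X) :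
    2 ^ Module.rank F X ≤ #(Set.Ici p) := by
  have rank_quotient : Module.rank F (X ⧸ p) = Module.rank F X :=
    eq_of_add_eq_of_aleph0_le ((add_comm _ _).trans p.rank_quotient_add_rank) hp hX
  calc 2 ^ Module.rank F X = 2 ^ Module.rank F (X ⧸ p) := by rw [rank_quotient]
    _ ≤ #(Submodule F (X ⧸ p)) := two_power_rank_le_mk_submodule
    _ = #(Set.Ici p) := mk_congr (Submodule.comapMkQRelIso p).toEquiv

theorem two_power_two_power_le_mk_submodule_pi {ι : Type u} [Infinite ι] [DecidableEq ι] :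
    2 ^ (2 : Cardinal) ^ #ι ≤
      #{Γ : Submodule (ZMod 2) (ι → ZMod 2) // ∀ i, Pi.single i 1 ∈ Γ} := by
  let p : Submodule (ZMod 2) (ι → ZMod 2) := .span _ (Set.range fun i ↦ Pi.single i 1)
  have rank_pi : Module.rank (ZMod 2) (ι → ZMod 2) = 2 ^ #ι := by
    rw [rank_fun_infinite]
    simp
  have rank_p : Module.rank (ZMod 2) p ≤ #ι := (rank_span_le _).trans mk_range_le
  have le_iff (Γ : Submodule (ZMod 2) (ι → ZMod 2)) : p ≤ Γ ↔ ∀ i, Pi.single i 1 ∈ Γ :=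
    Submodule.span_le.trans Set.range_subset_iff
  calc 2 ^ (2 : Cardinal) ^ #ι = 2 ^ Module.rank (ZMod 2) (ι → ZMod 2) := by rw [rank_pi]
    _ ≤ #(Set.Ici p) := two_power_rank_le_mk_Ici
        (rank_pi ▸ (aleph0_le_mk ι).trans (cantor _).le) (rank_pi ▸ rank_p.trans_lt (cantor _))
    _ = _ := mk_congr (Equiv.subtypeEquivRight le_iff)

end Counting

section Embedding

variable {𝕜 ι E : Type*} [RCLike 𝕜] [NormedAddCommGroup E] [NormedSpace 𝕜 E]

theorem nonempty_linearIsometry_linfty {d : ι → E} (hd : DenseRange d) :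
    Nonempty (E →ₗᵢ[𝕜] ℓ^∞(ι, 𝕜)) := by
  choose φ norm_φ_le φ_apply using fun i ↦ exists_dual_vector'' 𝕜 (d i)
  have norm_φ_apply_le (x : E) (i : ι) : ‖φ i x‖ ≤ ‖x‖ := by
    simpa using (φ i).le_of_opNorm_le (norm_φ_le i) x
  let J : E →ₗ[𝕜] ℓ^∞(ι, 𝕜) :=
    { toFun x := ⟨fun i ↦ φ i x, memℓp_infty ⟨‖x‖, Set.forall_mem_range.2 (norm_φ_apply_le x)⟩⟩
      map_add' x y := lp.ext (funext fun i ↦ map_add (φ i) x y)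
      map_smul' c x := lp.ext (funext fun i ↦ map_smul (φ i) c x) }
  have norm_J_le (x : E) : ‖J x‖ ≤ ‖x‖ :=
    lp.norm_le_of_forall_le (norm_nonneg x) (norm_φ_apply_le x)
  have continuous_J : Continuous J :=
    (J.mkContinuous 1 fun x ↦ (norm_J_le x).trans_eq (one_mul _).symm).continuous
  refine ⟨⟨J, fun x ↦ (norm_J_le x).antisymm ?_⟩⟩
  refine hd.induction_on (p := fun x ↦ ‖x‖ ≤ ‖J x‖) x
    (isClosed_le continuous_norm continuous_J.norm) fun i ↦ ?_
  calc ‖d i‖ = ‖J (d i) i‖ := by simp [J, φ_apply]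
    _ ≤ ‖J (d i)‖ := lp.norm_apply_le_norm ENNReal.top_ne_zero _ i

end Embedding

section CalkinCongr

variable {𝕜 E F : Type*} [NontriviallyNormedField 𝕜] [NormedAddCommGroup E] [NormedSpace 𝕜 E]
  [NormedAddCommGroup F] [NormedSpace 𝕜 F]

theorem mem_compactIdeal {T : E →L[𝕜] E} : T ∈ compactIdeal 𝕜 E ↔ IsCompactOperator T :=
  TwoSidedIdeal.mem_mk' ..

theorem isCompactOperator_conj_iff (e : E ≃L[𝕜] F) {T : E →L[𝕜] E} :
    IsCompactOperator (e.conjContinuousAlgEquiv T) ↔ IsCompactOperator T := by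
  refine ⟨fun h ↦ ?_, fun h ↦ ?_⟩
  · have := (h.comp_clm (e : E →L[𝕜] F)).clm_comp (e.symm : F →L[𝕜] E)
    simpa [Function.comp_def] using this
  · exact (h.comp_clm (e.symm : F →L[𝕜] E)).clm_comp (e : E →L[𝕜] F)

/-- An isomorphism of normed spaces induces an isomorphism of their Calkin algebras. -/
noncomputable def Calkin.congr (e : E ≃L[𝕜] F) : Calkin 𝕜 E ≃+* Calkin 𝕜 F :=
  RingCon.congr (e.conjContinuousAlgEquiv : (E →L[𝕜] E) ≃+* (F →L[𝕜] F)) <| by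
    ext S T
    simp [RingCon.comap_rel, TwoSidedIdeal.rel_iff, mem_compactIdeal, ← map_sub,
      isCompactOperator_conj_iff]

end CalkinCongr

section CalkinCounting

theorem mk_continuousLinearMap_le_power {𝕜 : Type*} {ι E F : Type u} [NontriviallyNormedField 𝕜]
    [NormedAddCommGroup E] [NormedSpace 𝕜 E] [NormedAddCommGroup F] [NormedSpace 𝕜 F]
    {d : ι → E} (hd : DenseRange d) : #(E →L[𝕜] F) ≤ #F ^ #ι := by
  rw [power_def]
  refine mk_le_of_injective (f := fun T : E →L[𝕜] F ↦ T ∘ d) fun S T h ↦ ?_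
  exact ContinuousLinearMap.coeFn_injective (hd.equalizer S.continuous T.continuous h)

/-- The closed submodules of `X` that have a dense `ι`-indexed family. -/
def closedSubmodulesWithDenseFamily (R ι X : Type*) [Semiring R] [AddCommMonoid X] [Module R X]
    [TopologicalSpace X] : Set (Submodule R X) :=
  {M | IsClosed (M : Set X) ∧ ∃ d : ι → M, DenseRange d}

theorem mk_closedSubmodulesWithDenseFamily_le_power {R : Type*} {ι X : Type u} [Semiring R]
    [AddCommMonoid X] [Module R X] [TopologicalSpace X] :
    #(closedSubmodulesWithDenseFamily R ι X) ≤ #X ^ #ι := by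
  rw [power_def]
  choose d hd using fun M : closedSubmodulesWithDenseFamily R ι X ↦ M.2.2
  have closure_range M : closure (Set.range fun i ↦ (d M i : X)) = M.1 := by
    refine (closure_minimal (Set.range_subset_iff.2 fun i ↦ (d M i).2) M.2.1).antisymm ?_
    rw [Set.range_comp' Subtype.val]
    exact Subtype.dense_iff.1 (hd M)
  refine mk_le_of_injective (f := fun M i ↦ (d M i : X)) fun M N h ↦ ?_
  refine Subtype.ext (SetLike.coe_injective ?_)
  rw [← closure_range M, ← closure_range N]
  exact congrArg (fun f ↦ closure (Set.range f)) h

variable {ι : Type u} [Infinite ι]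

theorem two_power_mk_power_mk : ((2 : Cardinal) ^ #ι) ^ #ι = 2 ^ #ι := by
  rw [← power_mul, mul_eq_self (aleph0_le_mk ι)]

theorem continuum_le_two_power_mk : 𝔠 ≤ (2 : Cardinal.{u}) ^ #ι := by
  rw [← two_power_aleph0]
  exact power_le_power_left two_ne_zero (aleph0_le_mk ι)

theorem mk_linfty_le : #(ℓ^∞(ι, ℂ)) ≤ 2 ^ #ι :=
  calc #(ℓ^∞(ι, ℂ)) ≤ #(ι → ℂ) := mk_le_of_injective (f := (⇑)) fun _ _ ↦ lp.ext
    _ = 𝔠 ^ #ι := by simp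
    _ ≤ (2 ^ #ι) ^ #ι := power_le_power_right continuum_le_two_power_mk
    _ = 2 ^ #ι := two_power_mk_power_mk

theorem mk_pi_calkin_le {𝕜 : Type*} {E : Type u} [NontriviallyNormedField 𝕜]
    [NormedAddCommGroup E] [NormedSpace 𝕜 E]
    (hE : #E ≤ 2 ^ #ι) {d : ι → E} (hd : DenseRange d) : #(ι → Calkin 𝕜 E) ≤ 2 ^ #ι :=
  calc #(ι → Calkin 𝕜 E) = #(Calkin 𝕜 E) ^ #ι := (power_def ..).symm
    _ ≤ #(E →L[𝕜] E) ^ #ι := power_le_power_right mk_quotient_le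
    _ ≤ ((2 ^ #ι) ^ #ι) ^ #ι := power_le_power_right
        ((mk_continuousLinearMap_le_power hd).trans (power_le_power_right hE))
    _ = 2 ^ #ι := by simp only [two_power_mk_power_mk]

/-- The sets of commutation exponents of `ι`-indexed families in the Calkin algebras of the Banach
spaces with a dense `ι`-indexed family. -/
def calkinCommutationSets (ι : Type u) : Set (Set (ι → ZMod 2)) :=
  {P | ∃ (E : Type u) (_ : NormedAddCommGroup E) (_ : NormedSpace ℂ E) (_ : CompleteSpace E)
    (d : ι → E) (a : ι → Calkin ℂ E), DenseRange d ∧ commutationExponents a = P}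

theorem exists_submodule_linfty_of_mem_calkinCommutationSets {ι : Type u} {P : Set (ι → ZMod 2)}
    (hP : P ∈ calkinCommutationSets ι) :
    ∃ M : closedSubmodulesWithDenseFamily ℂ ι ℓ^∞(ι, ℂ), ∃ a : ι → Calkin ℂ M.1,
      commutationExponents a = P := by
  obtain ⟨E, _, _, _, d, a, hd, rfl⟩ := hP
  obtain ⟨J⟩ := nonempty_linearIsometry_linfty (𝕜 := ℂ) hd
  let e : E ≃L[ℂ] LinearMap.range J.toLinearMap := J.equivRange.toContinuousLinearEquiv
  refine ⟨⟨LinearMap.range J.toLinearMap, J.isometry.isClosedEmbedding.isClosed_range, e ∘ d,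
    e.surjective.denseRange.comp hd e.continuous⟩, Calkin.congr e ∘ a, ?_⟩
  exact commutationExponents_ringEquiv_comp (Calkin.congr e) a

theorem mk_calkinCommutationSets_le : #(calkinCommutationSets ι) ≤ 2 ^ #ι := by
  let S := closedSubmodulesWithDenseFamily ℂ ι ℓ^∞(ι, ℂ)
  have mk_S : #S ≤ 2 ^ #ι :=
    mk_closedSubmodulesWithDenseFamily_le_power.trans <|
      (power_le_power_right mk_linfty_le).trans_eq two_power_mk_power_mk
  have mk_range (M : S) :
      #(Set.range (commutationExponents : (ι → Calkin ℂ M.1) → _)) ≤ 2 ^ #ι := by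
    obtain ⟨M, -, d, hd⟩ := M
    exact mk_range_le.trans (mk_pi_calkin_le ((mk_subtype_le _).trans mk_linfty_le) hd)
  calc #(calkinCommutationSets ι)
      ≤ #(⋃ M : S, Set.range (commutationExponents : (ι → Calkin ℂ M.1) → _)) :=
        mk_le_mk_of_subset fun P hP ↦ Set.mem_iUnion.2
          (exists_submodule_linfty_of_mem_calkinCommutationSets hP)
    _ ≤ #S * ⨆ M : S, #(Set.range (commutationExponents : (ι → Calkin ℂ M.1) → _)) :=
        mk_iUnion_le _
    _ ≤ 2 ^ #ι * 2 ^ #ι := mul_le_mul' mk_S (ciSup_le' mk_range)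
    _ = 2 ^ #ι := mul_eq_self ((aleph0_le_mk ι).trans (cantor _).le)

end CalkinCounting

theorem exists_denseRange_of_mk_le {ι X : Type u} [TopologicalSpace X] [Nonempty X] {D : Set X}
    (hD : Dense D) (hcard : #D ≤ #ι) : ∃ d : ι → X, DenseRange d := by
  obtain ⟨φ⟩ := (Cardinal.le_def _ _).1 hcard
  have : Nonempty D := hD.nonempty.to_subtype
  exact ⟨Subtype.val ∘ Function.invFun φ, hD.denseRange_val.comp
    (Function.invFun_surjective φ.injective).denseRange continuous_subtype_val⟩

theorem isEmpty_ringEquiv_calkin {R ι E : Type u} [Ring R] {a : ι → R}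
    (ha : commutationExponents a ∉ calkinCommutationSets ι) [NormedAddCommGroup E]
    [NormedSpace ℂ E] [CompleteSpace E] {d : ι → E} (hd : DenseRange d) :
    IsEmpty (R ≃+* Calkin ℂ E) :=
  ⟨fun e ↦ ha ⟨E, _, _, ‹_›, d, e ∘ a, hd, commutationExponents_ringEquiv_comp e a⟩⟩

theorem exists_submodule_notMem_calkinCommutationSets {ι : Type u} [Infinite ι] [DecidableEq ι] :
    ∃ Γ : Submodule (ZMod 2) (ι → ZMod 2), (∀ i, Pi.single i 1 ∈ Γ) ∧
      (Γ : Set (ι → ZMod 2)) ∉ calkinCommutationSets ι := by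
  by_contra! h
  refine (cantor ((2 : Cardinal) ^ #ι)).not_ge ?_
  calc 2 ^ (2 : Cardinal) ^ #ι
      ≤ #{Γ : Submodule (ZMod 2) (ι → ZMod 2) // ∀ i, Pi.single i 1 ∈ Γ} :=
        two_power_two_power_le_mk_submodule_pi
    _ ≤ #(calkinCommutationSets ι) :=
        mk_le_of_injective (f := fun Γ ↦ ⟨Γ.1, h Γ.1 Γ.2⟩) fun Γ Δ hΓΔ ↦
          Subtype.ext (SetLike.coe_injective (congrArg Subtype.val hΓΔ))
    _ ≤ 2 ^ #ι := mk_calkinCommutationSets_le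

theorem mk_finsupp_prod_submodule_le {ι : Type u} [Infinite ι]
    (Γ : Submodule (ZMod 2) (ι → ZMod 2)) : #((ι →₀ ZMod 2) × Γ) ≤ 2 ^ #ι := by
  have mk_pi : #(ι → ZMod 2) = 2 ^ #ι := by simp
  calc #((ι →₀ ZMod 2) × Γ) = #(ι →₀ ZMod 2) * #Γ := by simp only [mk_prod, lift_id]
    _ ≤ 2 ^ #ι * 2 ^ #ι := mul_le_mul' ((mk_le_of_injective DFunLike.coe_injective).trans_eq mk_pi)
        ((mk_subtype_le _).trans_eq mk_pi)
    _ = 2 ^ #ι := mul_eq_self ((aleph0_le_mk ι).trans (cantor _).le)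

theorem statement6_general (lam : Cardinal.{u}) (hlam : ℵ₀ ≤ lam) :
    ∃ A : BundledCStarAlgebra.{u}, IsSimpleRing A.carrier ∧
      (∃ D : Set A.carrier, Dense D ∧ #D ≤ 2 ^ lam) ∧
      ∀ (E : Type u) [NormedAddCommGroup E] [NormedSpace ℂ E] [CompleteSpace E],
        (∃ D : Set E, Dense D ∧ #D ≤ lam) → IsEmpty (A.carrier ≃+* Calkin ℂ E) := by
  classical
  induction lam using Cardinal.inductionOn with | mk ι
  have : Infinite ι := infinite_iff.2 hlam
  obtain ⟨Γ, single_mem, notMem⟩ := exists_submodule_notMem_calkinCommutationSets (ι := ι)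
  obtain ⟨D, hD, mk_D⟩ := TwistedGroupAlgebra.exists_dense_mk_le (evaluationForm Γ)
  refine ⟨⟨TwistedGroupAlgebra (evaluationForm Γ)⟩,
    TwistedGroupAlgebra.isSimpleRing (separatingRight_evaluationForm_add_flip single_mem),
    ⟨D, hD, mk_D.trans (max_le (mk_finsupp_prod_submodule_le Γ) continuum_le_two_power_mk)⟩, ?_⟩
  rintro E _ _ _ ⟨D', hD', mk_D'⟩
  obtain ⟨d, hd⟩ := exists_denseRange_of_mk_le hD' mk_D'
  exact isEmpty_ringEquiv_calkin (by rwa [commutationExponents_generator_single]) hd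

/-- For every infinite cardinal `λ` there exists a unital complex C⋆-algebra `A` that is simple
(its only closed two-sided ideals are `{0}` and `A`), has a dense subset of cardinality at most
`2 ^ λ`, and such that for every complex Banach space `E` having a dense subset of cardinality
at most `λ`, there is no continuous algebra isomorphism between `A` and the Calkin algebra
`B(E)/K(E)`. -/
theorem statement6 (lam : Cardinal.{u}) (hlam : Cardinal.aleph0 ≤ lam) :
    ∃ A : BundledCStarAlgebra.{u},
      (∀ I : TwoSidedIdeal A.carrier, IsClosed (I : Set A.carrier) → I = ⊥ ∨ I = ⊤) ∧
      (∃ D : Set A.carrier, Dense D ∧ #D ≤ 2 ^ lam) ∧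
      ∀ (E : Type u) [NormedAddCommGroup E] [NormedSpace ℂ E] [CompleteSpace E],
        (∃ D : Set E, Dense D ∧ #D ≤ lam) →
        ¬∃ e : A.carrier ≃ₐ[ℂ] Calkin ℂ E, Continuous e := by
  obtain ⟨A, _, dense, isEmpty_ringEquiv⟩ := statement6_general lam hlam
  exact ⟨A, fun I _ ↦ eq_bot_or_eq_top I, dense,
    fun E _ _ _ hE ⟨e, _⟩ ↦ (isEmpty_ringEquiv E hE).false e.toRingEquiv⟩
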